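/- (Chernoff bound) For each n let ν_n, ω_n be positive definite matrices on a finite dimensional Hilbert space H_n and w_n > 0 weights with w_n → ∞. Assume that e(s) = lim_n (1/w_n) log Tr(ν_n^s ω_n^{1−s}) exists and is finite for s ∈ [0,1], is continuous on [0,1], differentiable on (0,1), and D⁺e(0) < D⁻e(1). Then lim_n (1/w_n) log D(ν_n, ω_n) exists and equals inf_{s∈[0,1]} e(s), where D(ν_n,ω_n) = (1/2)(Tr ω_n + Tr ν_n − Tr|ω_n − ν_n|). -/

import Mathlib

open scoped ComplexOrder
open Filter

/-- Functional calculus for Hermitian matrices (junk value `0` off the Hermitian matrices). -/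
noncomputable def cfcM {d : ℕ} (f : ℝ → ℝ) (A : Matrix (Fin d) (Fin d) ℂ) :
    Matrix (Fin d) (Fin d) ℂ :=
  if h : A.IsHermitian then
    (h.eigenvectorUnitary : Matrix (Fin d) (Fin d) ℂ) *
      Matrix.diagonal (fun i => (f (h.eigenvalues i) : ℂ)) *
      (star (h.eigenvectorUnitary : Matrix (Fin d) (Fin d) ℂ))
  else 0

/-- Real power of a (positive) Hermitian matrix via functional calculus. -/
noncomputable def mpow {d : ℕ} (A : Matrix (Fin d) (Fin d) ℂ) (s : ℝ) :
    Matrix (Fin d) (Fin d) ℂ := cfcM (fun x => x ^ s) A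

/-- Absolute value of a Hermitian matrix via functional calculus. -/
noncomputable def matAbs {d : ℕ} (A : Matrix (Fin d) (Fin d) ℂ) :
    Matrix (Fin d) (Fin d) ℂ := cfcM (fun x => |x|) A

/-- Minimal error probability `D(ν,ω) = (1/2)(Tr ω + Tr ν − Tr|ω−ν|)`. -/
noncomputable def minErr {d : ℕ} (ν ω : Matrix (Fin d) (Fin d) ℂ) : ℝ :=
  (1 / 2 : ℝ) * ((ω.trace).re + (ν.trace).re - ((matAbs (ω - ν)).trace).re)

/-!
Since `|X| = 2 X⁺ - X`, one has `D(ν, ω) = Tr ω - Tr (ω - ν)⁺`. Operator monotonicity of `x ^ s`,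
applied to `ν, ω ≤ ν + (ω - ν)⁺`, yields `D(ν, ω) ≤ Tr (ν ^ s ω ^ (1 - s))`, hence the upper bound.

For the lower bound, eigenbases of `ν` and `ω` turn `Tr (ν ^ s ω ^ (1 - s))` into a classical sum
`∑ q x ^ s y ^ (1 - s)`, and every projection test has total error at least `½ ∑ q min x y`. Since
`e` is differentiable at `s`, exponential tilting shows that the sum at `s` is carried by the pairs
with `log (x / y) ≈ w_n e'(s)`, so that the exponential rate of `D` is at least
`e s - max (s e'(s)) ((s - 1) e'(s))`. By Rolle's theorem applied to `s (1 - s) exp (-e s / η)`,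
the subtracted term is at most `η` at some `s`, for every `η > 0`.
-/

section Asymptotics

open Set Real Topology

/-- `TiltingBound C M Z` controls the exponential-moment function `Z` by a bulk term, which is
proportional to `M`, and two exponentially tilted tails. In the model case
`Z s = x ^ s * y ^ (1 - s)` and `M = min x y`, the bulk is `a ≤ log (x / y) ≤ b` and the tails are
its two complementary half-lines. It turns differentiability of the exponential rate of `Z` into
lower bounds on that of `M`. -/
def TiltingBound (C M : ℝ) (Z : ℝ → ℝ) : Prop :=
  ∀ ⦃s t a b : ℝ⦄, s ∈ Ioo (0 : ℝ) 1 → 0 ≤ t →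
    Z s ≤ C * exp (max (s * b) ((s - 1) * a)) * M
      + exp (-(t * b)) * Z (s + t) + exp (t * a) * Z (s - t)

lemma rpow_mul_rpow_one_sub_eq_exp_mul {x y : ℝ} (hx : 0 < x) (hy : 0 < y) (s t : ℝ) :
    x ^ s * y ^ (1 - s) = exp ((s - t) * (log x - log y)) * (x ^ t * y ^ (1 - t)) := by
  simp only [rpow_def_of_pos hx, rpow_def_of_pos hy, ← exp_add]
  ring_nf

namespace TiltingBound

-- With `u = log (x / y)`, the last two terms account for `b ≤ u` and for `u ≤ a`.
lemma rpow_mul_rpow {x y : ℝ} (hx : 0 ≤ x) (hy : 0 ≤ y) :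
    TiltingBound 1 (min x y) fun s => x ^ s * y ^ (1 - s) := by
  intro s t a b hs ht
  have hmin : 0 ≤ 1 * exp (max (s * b) ((s - 1) * a)) * min x y :=
    mul_nonneg (by positivity) (le_min hx hy)
  have hright : 0 ≤ exp (-(t * b)) * (x ^ (s + t) * y ^ (1 - (s + t))) := by positivity
  have hleft : 0 ≤ exp (t * a) * (x ^ (s - t) * y ^ (1 - (s - t))) := by positivity
  have hs' : 0 < 1 - s := sub_pos.2 hs.2
  rcases hx.eq_or_lt with rfl | hx
  · beta_reduce
    rw [zero_rpow hs.1.ne', zero_mul]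
    linarith
  rcases hy.eq_or_lt with rfl | hy
  · beta_reduce
    rw [zero_rpow hs'.ne', mul_zero]
    linarith
  have hshift (r c : ℝ) (hc : (s - r) * (log x - log y) ≤ c) :
      x ^ s * y ^ (1 - s) ≤ exp c * (x ^ r * y ^ (1 - r)) := by
    rw [rpow_mul_rpow_one_sub_eq_exp_mul hx hy s r]
    gcongr
  rcases le_total b (log x - log y) with hb | hb
  · linarith [hshift (s + t) (-(t * b)) (by nlinarith)]
  rcases le_total (log x - log y) a with ha | ha
  · linarith [hshift (s - t) (t * a) (by nlinarith)]
  suffices x ^ s * y ^ (1 - s) ≤ exp (max (s * b) ((s - 1) * a)) * min x y by linarith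
  rcases le_total x y with hxy | hxy
  · rw [min_eq_left hxy]
    simpa using hshift 1 _ (le_max_of_le_right (by nlinarith))
  · rw [min_eq_right hxy]
    simpa using hshift 0 _ (le_max_of_le_left (by nlinarith [hs.1]))

lemma sum_mul {κ : Type*} (I : Finset κ) {q M : κ → ℝ} {C : ℝ} {Z : κ → ℝ → ℝ}
    (hq : ∀ i ∈ I, 0 ≤ q i) (h : ∀ i ∈ I, TiltingBound C (M i) (Z i)) :
    TiltingBound C (∑ i ∈ I, q i * M i) fun s => ∑ i ∈ I, q i * Z i s := by
  intro s t a b hs ht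
  simp only [Finset.mul_sum, ← Finset.sum_add_distrib]
  refine Finset.sum_le_sum fun i hi => ?_
  linarith [mul_le_mul_of_nonneg_left (h i hi (a := a) (b := b) hs ht) (hq i hi)]

lemma mono {C M C' M' : ℝ} {Z : ℝ → ℝ} (h : TiltingBound C M Z) (hM : C * M ≤ C' * M') :
    TiltingBound C' M' Z := by
  intro s t a b hs ht
  have := mul_le_mul_of_nonneg_left hM (exp_pos (max (s * b) ((s - 1) * a))).le
  linarith [h (a := a) (b := b) hs ht]

end TiltingBound

lemma eventually_lt_add_mul_of_hasDerivAt {f : ℝ → ℝ} {f' c x : ℝ} (hf : HasDerivAt f f' x)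
    (hc : f' < c) : ∀ᶠ t in 𝓝[>] 0, f (x + t) < f x + t * c := by
  filter_upwards [hf.tendsto_slope_zero_right.eventually_lt_const hc, self_mem_nhdsWithin]
    with t hslope ht
  rw [smul_eq_mul, inv_mul_lt_iff₀ ht] at hslope
  linarith

lemma eventually_sub_lt_sub_mul_of_hasDerivAt {f : ℝ → ℝ} {f' c x : ℝ} (hf : HasDerivAt f f' x)
    (hc : c < f') : ∀ᶠ t in 𝓝[>] 0, f (x - t) < f x - t * c := by
  have hreflect : HasDerivAt (fun t => f (x - t)) (-f') 0 :=
    HasDerivAt.comp_const_sub x 0 (by rwa [sub_zero])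
  filter_upwards [eventually_lt_add_mul_of_hasDerivAt hreflect (neg_lt_neg hc)] with t ht
  simpa [sub_eq_add_neg] using ht

-- Rolle's theorem for `s (1 - s) exp (-e s / η)`, a critical point of which satisfies
-- `e' s = η (1 - 2 s) / (s (1 - s))`.
lemma exists_max_mul_deriv_le {e : ℝ → ℝ} (hdiff : ∀ s ∈ Ioo (0 : ℝ) 1, DifferentiableAt ℝ e s)
    (hbdd : BddBelow (e '' Ioo 0 1)) {η : ℝ} (hη : 0 < η) :
    ∃ s ∈ Ioo (0 : ℝ) 1, max (s * deriv e s) ((s - 1) * deriv e s) ≤ η := by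
  obtain ⟨m, hm⟩ := hbdd
  have hvanish : ∀ {x : ℝ} {F : Filter ℝ}, F ≤ 𝓝 x → x * (1 - x) = 0 → Ioo 0 1 ∈ F →
      Tendsto (fun s => s * (1 - s) * exp (-(e s) / η)) F (𝓝 0) := by
    intro x F hF hx hmem
    refine Tendsto.zero_mul_isBoundedUnder_le ?_ ⟨exp (-m / η), ?_⟩
    · rw [← hx]
      exact (Continuous.tendsto (by fun_prop) x).mono_left hF
    · refine eventually_map.2 (mem_of_superset hmem fun s hs => ?_)
      have : m ≤ e s := hm (mem_image_of_mem e hs)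
      simp only [Function.comp_apply, norm_eq_abs, abs_exp]
      exact exp_le_exp.2 (div_le_div_of_nonneg_right (neg_le_neg this) hη.le)
  have hderiv : ∀ s ∈ Ioo (0 : ℝ) 1, HasDerivAt (fun s => s * (1 - s) * exp (-(e s) / η))
      ((1 - 2 * s - s * (1 - s) * (deriv e s / η)) * exp (-(e s) / η)) s := by
    intro s hs
    refine (((hasDerivAt_id s).mul ((hasDerivAt_id s).const_sub 1)).mul
      (((hdiff s hs).hasDerivAt.neg.div_const η).exp)).congr_deriv ?_
    simp only [id, Pi.mul_apply, Pi.neg_apply]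
    ring
  obtain ⟨s, hs, hcrit⟩ := exists_hasDerivAt_eq_zero' zero_lt_one
    (hvanish nhdsWithin_le_nhds (by simp) (Ioo_mem_nhdsGT zero_lt_one))
    (hvanish nhdsWithin_le_nhds (by simp) (Ioo_mem_nhdsLT zero_lt_one)) hderiv
  have hcrit' : s * (1 - s) * deriv e s = η * (1 - 2 * s) := by
    have := (mul_eq_zero.1 hcrit).resolve_right (exp_ne_zero _)
    field_simp at this
    linarith
  refine ⟨s, hs, max_le ?_ ?_⟩
  · refine le_of_mul_le_mul_left ?_ (sub_pos.2 hs.2)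
    linarith [mul_pos hη hs.1]
  · refine le_of_mul_le_mul_left ?_ hs.1
    linarith [mul_pos hη (sub_pos.2 hs.2)]

variable {ι : Type*} {l : Filter ι} {w : ι → ℝ}

lemma tendsto_zero_of_tendsto_log_div {u : ι → ℝ} {c : ℝ} (hu : ∀ᶠ n in l, 0 < u n)
    (hw : Tendsto w l atTop) (hlog : Tendsto (fun n => log (u n) / w n) l (𝓝 c)) (hc : c < 0) :
    Tendsto u l (𝓝 0) := by
  refine (tendsto_exp_atBot.comp (hlog.neg_mul_atTop hc hw)).congr' ?_
  filter_upwards [hu, hw.eventually_gt_atTop 0] with n hun hwn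
  rw [Function.comp_apply, div_mul_cancel₀ _ hwn.ne', exp_log hun]

lemma eventually_ne_zero_of_tendsto_log_div {u : ι → ℝ} {c : ℝ}
    (hlog : Tendsto (fun n => log (u n) / w n) l (𝓝 c)) (hc : c ≠ 0) :
    ∀ᶠ n in l, u n ≠ 0 := by
  filter_upwards [hlog.eventually_ne hc] with n hn hun
  exact hn (by simp [hun])

lemma eventually_exp_mul_le_of_tendsto_log_div {f g : ι → ℝ} {x y τ κ : ℝ}
    (hf : ∀ᶠ n in l, 0 < f n) (hg : ∀ᶠ n in l, 0 < g n) (hw : Tendsto w l atTop)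
    (hfx : Tendsto (fun n => log (f n) / w n) l (𝓝 x))
    (hgy : Tendsto (fun n => log (g n) / w n) l (𝓝 y)) (hτ : τ + y < x) (hκ : 0 < κ) :
    ∀ᶠ n in l, exp (τ * w n) * g n ≤ κ * f n := by
  have hratio : Tendsto (fun n => exp (τ * w n) * g n / f n) l (𝓝 0) := by
    refine tendsto_zero_of_tendsto_log_div ?_ hw
      (((tendsto_const_nhds.add hgy).sub hfx).congr' ?_) (sub_neg.2 hτ)
    · filter_upwards [hf, hg] with n hfn hgn
      positivity
    · filter_upwards [hf, hg, hw.eventually_gt_atTop 0] with n hfn hgn hwn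
      rw [log_div (by positivity) hfn.ne', log_mul (exp_ne_zero _) hgn.ne', log_exp]
      field_simp
  filter_upwards [hratio.eventually_lt_const hκ, hf] with n hn hfn
  exact ((div_lt_iff₀ hfn).1 hn).le

lemma eventually_lt_log_div_of_le_exp_mul {f M : ι → ℝ} {x c C K : ℝ}
    (hf : ∀ᶠ n in l, 0 < f n) (hw : Tendsto w l atTop)
    (hfx : Tendsto (fun n => log (f n) / w n) l (𝓝 x)) (hC : 0 < C)
    (hfM : ∀ᶠ n in l, f n ≤ C * exp (K * w n) * M n) (hc : c < x - K) :
    ∀ᶠ n in l, 0 < M n ∧ c < log (M n) / w n := by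
  have hlim : Tendsto (fun n => log (f n) / w n - K - log C / w n) l (𝓝 (x - K - 0)) :=
    (hfx.sub_const K).sub (tendsto_const_nhds.div_atTop hw)
  filter_upwards [hf, hfM, hw.eventually_gt_atTop 0,
    hlim.eventually_const_lt (by simpa using hc)] with n hfn hle hwn hlt
  have hMn : 0 < M n := pos_of_mul_pos_right (hfn.trans_le hle) (by positivity)
  have hlog := log_le_log hfn hle
  rw [log_mul (by positivity) hMn.ne', log_mul hC.ne' (exp_ne_zero _), log_exp] at hlog
  refine ⟨hMn, hlt.trans_le ?_⟩
  rw [← sub_nonneg]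
  have : 0 ≤ (log C + K * w n + log (M n) - log (f n)) / w n :=
    div_nonneg (sub_nonneg.2 hlog) hwn.le
  refine this.trans_eq ?_
  field_simp
  ring

variable {Z : ι → ℝ → ℝ} {M : ι → ℝ} {e : ℝ → ℝ} {C : ℝ}

lemma eventually_lt_log_div_of_tiltingBound (hw : Tendsto w l atTop)
    (hZ : ∀ᶠ n in l, ∀ s ∈ Ioo (0 : ℝ) 1, 0 < Z n s)
    (he : ∀ s ∈ Ioo (0 : ℝ) 1, Tendsto (fun n => log (Z n s) / w n) l (𝓝 (e s)))
    (hC : 0 < C) (htilt : ∀ n, TiltingBound C (M n) (Z n))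
    {s v c : ℝ} (hs : s ∈ Ioo (0 : ℝ) 1) (hv : HasDerivAt e v s)
    (hc : c < e s - max (s * v) ((s - 1) * v)) :
    ∀ᶠ n in l, 0 < M n ∧ c < log (M n) / w n := by
  obtain ⟨δ, hδc, hδ⟩ : ∃ δ, c < e s - max (s * (v + δ)) ((s - 1) * (v - δ)) ∧ 0 < δ := by
    have hcont : Continuous fun δ => e s - max (s * (v + δ)) ((s - 1) * (v - δ)) := by fun_prop
    have hnear := (hcont.tendsto 0).eventually_const_lt (by simpa using hc)
    exact ((hnear.filter_mono nhdsWithin_le_nhds).and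
      (eventually_mem_nhdsWithin (s := Ioi (0 : ℝ)))).exists
  obtain ⟨t, ht, hright, hleft, hts, hts'⟩ : ∃ t, 0 < t ∧ e (s + t) < e s + t * (v + δ) ∧
      e (s - t) < e s - t * (v - δ) ∧ t < s ∧ t < 1 - s := by
    have hsmall : ∀ᶠ t in 𝓝[>] (0 : ℝ), t < s ∧ t < 1 - s :=
      ((eventually_lt_nhds hs.1).and (eventually_lt_nhds (sub_pos.2 hs.2))).filter_mono
        nhdsWithin_le_nhds
    exact (eventually_mem_nhdsWithin.and
      ((eventually_lt_add_mul_of_hasDerivAt hv (by linarith)).and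
      ((eventually_sub_lt_sub_mul_of_hasDerivAt hv (by linarith)).and hsmall))).exists
  have hs_add : s + t ∈ Ioo (0 : ℝ) 1 := ⟨by linarith [hs.1], by linarith⟩
  have hs_sub : s - t ∈ Ioo (0 : ℝ) 1 := ⟨by linarith, by linarith [hs.2]⟩
  have hpos {r : ℝ} (hr : r ∈ Ioo (0 : ℝ) 1) : ∀ᶠ n in l, 0 < Z n r := hZ.mono fun n h => h r hr
  have htail_add : ∀ᶠ n in l, exp (-(t * (v + δ)) * w n) * Z n (s + t) ≤ 1 / 4 * Z n s :=
    eventually_exp_mul_le_of_tendsto_log_div (hpos hs) (hpos hs_add) hw (he s hs) (he _ hs_add)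
      (by linarith) (by norm_num)
  have htail_sub : ∀ᶠ n in l, exp (t * (v - δ) * w n) * Z n (s - t) ≤ 1 / 4 * Z n s :=
    eventually_exp_mul_le_of_tendsto_log_div (hpos hs) (hpos hs_sub) hw (he s hs) (he _ hs_sub)
      (by linarith) (by norm_num)
  refine eventually_lt_log_div_of_le_exp_mul (hpos hs) hw (he s hs) (C := 2 * C) (by positivity)
    ?_ hδc
  filter_upwards [htail_add, htail_sub, hw.eventually_gt_atTop 0] with n hn_add hn_sub hwn
  have hn := htilt n (a := (v - δ) * w n) (b := (v + δ) * w n) hs ht.le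
  simp only [← mul_assoc, ← max_mul_of_nonneg _ _ hwn.le, ← neg_mul] at hn hn_add hn_sub ⊢
  linarith

lemma tendsto_log_div_sInf_of_tiltingBound (hw : Tendsto w l atTop)
    (hZ : ∀ᶠ n in l, ∀ s ∈ Ioo (0 : ℝ) 1, 0 < Z n s)
    (he : ∀ s ∈ Ioo (0 : ℝ) 1, Tendsto (fun n => log (Z n s) / w n) l (𝓝 (e s)))
    (hdiff : ∀ s ∈ Ioo (0 : ℝ) 1, DifferentiableAt ℝ e s)
    (hMZ : ∀ n, ∀ s ∈ Ioo (0 : ℝ) 1, M n ≤ Z n s)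
    (hC : 0 < C) (htilt : ∀ n, TiltingBound C (M n) (Z n)) :
    Tendsto (fun n => log (M n) / w n) l (𝓝 (sInf (e '' Ioo 0 1))) := by
  rcases l.eq_or_neBot with rfl | _
  · exact tendsto_bot
  have hlower {s c : ℝ} (hs : s ∈ Ioo (0 : ℝ) 1)
      (hc : c < e s - max (s * deriv e s) ((s - 1) * deriv e s)) :
      ∀ᶠ n in l, 0 < M n ∧ c < log (M n) / w n :=
    eventually_lt_log_div_of_tiltingBound hw hZ he hC htilt hs (hdiff s hs).hasDerivAt hc
  have hhalf : (1 / 2 : ℝ) ∈ Ioo (0 : ℝ) 1 := by norm_num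
  obtain ⟨c₀, hc₀⟩ := exists_lt (e (1 / 2) - max (1 / 2 * deriv e (1 / 2))
    ((1 / 2 - 1) * deriv e (1 / 2)))
  have hupper {s : ℝ} (hs : s ∈ Ioo (0 : ℝ) 1) :
      ∀ᶠ n in l, log (M n) / w n ≤ log (Z n s) / w n := by
    filter_upwards [hlower hhalf hc₀, hw.eventually_gt_atTop 0] with n hn hwn
    exact div_le_div_of_nonneg_right (log_le_log hn.1 (hMZ n s hs)) hwn.le
  have hbdd : BddBelow (e '' Ioo 0 1) := by
    refine ⟨c₀, forall_mem_image.2 fun s hs => ge_of_tendsto (he s hs) ?_⟩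
    filter_upwards [hlower hhalf hc₀, hupper hs] with n hn hle
    exact hn.2.le.trans hle
  refine tendsto_order.2 ⟨fun c hc => ?_, fun c hc => ?_⟩
  · obtain ⟨s, hs, hmax⟩ := exists_max_mul_deriv_le hdiff hbdd (half_pos (sub_pos.2 hc))
    have hinf := csInf_le hbdd (mem_image_of_mem e hs)
    exact (hlower hs (by linarith)).mono fun n hn => hn.2
  · obtain ⟨_, ⟨s, hs, rfl⟩, hsc⟩ :=
      exists_lt_of_csInf_lt ((nonempty_Ioo.2 zero_lt_one).image e) hc
    filter_upwards [hupper hs, (he s hs).eventually_lt_const hsc] with n hle hlt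
    exact hle.trans_lt hlt

lemma sInf_image_Ioo_eq_of_continuousOn {f : ℝ → ℝ} {a b : ℝ} (hab : a < b)
    (hf : ContinuousOn f (Icc a b)) : sInf (f '' Ioo a b) = sInf (f '' Icc a b) := by
  have hbdd : BddBelow (f '' Icc a b) := isCompact_Icc.bddBelow_image hf
  have hsub : f '' Ioo a b ⊆ f '' Icc a b := image_mono Ioo_subset_Icc_self
  have hne : (f '' Ioo a b).Nonempty := (nonempty_Ioo.2 hab).image f
  refine le_antisymm (le_csInf (hne.mono hsub) fun y hy => ?_) (csInf_le_csInf hbdd hne hsub)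
  rw [← closure_Ioo hab.ne] at hf hy
  exact closure_minimal (fun z hz => csInf_le (hbdd.mono hsub) hz) isClosed_Ici
    (hf.image_closure hy)

lemma exists_ne_of_hasDerivWithinAt_endpoints_ne {f : ℝ → ℝ} {f₁ f₂ a b : ℝ} (hab : a < b)
    (ha : HasDerivWithinAt f f₁ (Ici a) a) (hb : HasDerivWithinAt f f₂ (Iic b) b)
    (hne : f₁ ≠ f₂) (c : ℝ) : ∃ x ∈ Icc a b, f x ≠ c := by
  by_contra! hconst
  have hzero {x f' : ℝ} (hx : x ∈ Icc a b) (hf : HasDerivWithinAt f f' (Icc a b) x) : f' = 0 :=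
    (uniqueDiffOn_Icc hab x hx).eq_deriv _ hf
      ((hasDerivWithinAt_const x _ c).congr hconst (hconst x hx))
  exact hne ((hzero (left_mem_Icc.2 hab.le) (ha.mono Icc_subset_Ici_self)).trans
    (hzero (right_mem_Icc.2 hab.le) (hb.mono Icc_subset_Iic_self)).symm)

end Asymptotics

lemma exists_isStarProjection_mul_eq_posPart {𝒜 : Type*} [Ring 𝒜] [StarRing 𝒜]
    [TopologicalSpace 𝒜] [IsTopologicalRing 𝒜] [T2Space 𝒜] [Algebra ℝ 𝒜]
    [ContinuousFunctionalCalculus ℝ 𝒜 IsSelfAdjoint] {a : 𝒜} (ha : IsSelfAdjoint a)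
    (hfin : (spectrum ℝ a).Finite) : ∃ p : 𝒜, IsStarProjection p ∧ a * p = a⁺ := by
  have hcont (f : ℝ → ℝ) : ContinuousOn f (spectrum ℝ a) := hfin.continuousOn f
  refine ⟨cfc (fun x : ℝ => if 0 < x then (1 : ℝ) else 0) a, ⟨?_, cfc_predicate _ a⟩, ?_⟩
  · rw [IsIdempotentElem, ← cfc_mul _ _ a (hcont _) (hcont _)]
    congr! 2
    split_ifs <;> simp
  · nth_rw 1 [← cfc_id' ℝ a ha]
    rw [← cfc_mul _ _ a (hcont _) (hcont _), CFC.posPart_def, cfcₙ_eq_cfc]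
    congr! 2
    split_ifs with hx
    · simp [hx.le]
    · simp [not_lt.1 hx]

section Rpow

variable {𝒜 : Type*} [PartialOrder 𝒜] [Ring 𝒜] [StarRing 𝒜] [TopologicalSpace 𝒜]
  [StarOrderedRing 𝒜] [Algebra ℝ 𝒜] [ContinuousFunctionalCalculus ℝ 𝒜 IsSelfAdjoint]
  [NonnegSpectrumClass ℝ 𝒜] [IsSemitopologicalRing 𝒜] [T2Space 𝒜]

lemma rpow_mul_rpow_of_pos {s t : ℝ} (hs : 0 < s) (ht : 0 < t) (a : 𝒜) :
    a ^ s * a ^ t = a ^ (s + t) := by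
  lift s to NNReal using hs.le
  lift t to NNReal using ht.le
  norm_cast at hs ht
  rw [← CFC.nnrpow_eq_rpow hs, ← CFC.nnrpow_eq_rpow ht, ← NNReal.coe_add,
    ← CFC.nnrpow_eq_rpow (add_pos hs ht), CFC.nnrpow_add hs ht]

lemma rpow_mul_rpow_one_sub {s : ℝ} (hs : s ∈ Set.Ioo (0 : ℝ) 1) {a : 𝒜} (ha : 0 ≤ a) :
    a ^ s * a ^ (1 - s) = a := by
  rw [rpow_mul_rpow_of_pos hs.1 (sub_pos.2 hs.2), add_sub_cancel, CFC.rpow_one a ha]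

end Rpow

section Matrices

open Matrix MatrixOrder Matrix.Norms.L2Operator

variable {n 𝕜 : Type*} [Fintype n] [RCLike 𝕜]

lemma trace_mul_nonneg_of_posSemidef {A B : Matrix n n 𝕜} (hA : A.PosSemidef)
    (hB : B.PosSemidef) : 0 ≤ (A * B).trace := by
  classical
  obtain ⟨C, rfl⟩ := CStarAlgebra.nonneg_iff_eq_star_mul_self.1 hA.nonneg
  rw [mul_assoc, trace_mul_comm]
  exact (hB.mul_mul_conjTranspose_same C).trace_nonneg

lemma trace_mul_eq_zero_iff_of_posSemidef {A B : Matrix n n 𝕜} (hA : A.PosSemidef)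
    (hB : B.PosSemidef) : (A * B).trace = 0 ↔ A * B = 0 := by
  classical
  refine ⟨fun h => ?_, fun h => by rw [h, trace_zero]⟩
  obtain ⟨C, rfl⟩ := CStarAlgebra.nonneg_iff_eq_star_mul_self.1 hA.nonneg
  obtain ⟨D, rfl⟩ := CStarAlgebra.nonneg_iff_eq_mul_star_self.1 hB.nonneg
  have hnorm : (C * D * (C * D)ᴴ).trace = (star C * C * (D * star D)).trace := by
    rw [conjTranspose_mul, ← mul_assoc, trace_mul_comm]
    simp only [mul_assoc, star_eq_conjTranspose]
  have hCD : C * D = 0 := trace_mul_conjTranspose_self_eq_zero_iff.1 (hnorm.trans h)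
  rw [mul_assoc, ← mul_assoc C, hCD, zero_mul, mul_zero]

variable [DecidableEq n] {A B : Matrix n n ℂ}

lemma rpow_posSemidef (A : Matrix n n ℂ) (s : ℝ) : (A ^ s).PosSemidef :=
  nonneg_iff_posSemidef.1 CFC.rpow_nonneg

/-- The exponential `Tr (A ^ s B ^ (1 - s))` of the Rényi relative entropy `Ent_s(A|B)`. Working
with it rather than with its logarithm avoids the junk value `log 0 = 0`. -/
noncomputable def renyiTrace (A B : Matrix n n ℂ) (s : ℝ) : ℝ :=
  (A ^ s * B ^ (1 - s)).trace.re

lemma renyiTrace_pos (hA : A.PosSemidef) (hB : B.PosSemidef) (hAB : A * B ≠ 0) {s : ℝ}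
    (hs : s ∈ Set.Ioo (0 : ℝ) 1) : 0 < renyiTrace A B s := by
  have hprod : A ^ s * B ^ (1 - s) ≠ 0 := by
    intro h
    have hs' : 1 - s ∈ Set.Ioo (0 : ℝ) 1 := ⟨sub_pos.2 hs.2, sub_lt_self 1 hs.1⟩
    apply hAB
    calc A * B = A ^ (1 - s) * A ^ s * (B ^ (1 - s) * B ^ s) := by
          simpa only [sub_sub_cancel] using congrArg₂ (· * ·)
            (rpow_mul_rpow_one_sub hs' hA.nonneg).symm (rpow_mul_rpow_one_sub hs' hB.nonneg).symm
      _ = A ^ (1 - s) * (A ^ s * B ^ (1 - s)) * B ^ s := by simp only [mul_assoc]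
      _ = 0 := by rw [h, mul_zero, zero_mul]
  have hpos : 0 < (A ^ s * B ^ (1 - s)).trace :=
    lt_of_le_of_ne (trace_mul_nonneg_of_posSemidef (rpow_posSemidef A s) (rpow_posSemidef B _))
      fun h => hprod <| (trace_mul_eq_zero_iff_of_posSemidef (rpow_posSemidef A s)
        (rpow_posSemidef B _)).1 h.symm
  exact (Complex.lt_def.1 hpos).1

lemma trace_sub_posPart_le_renyiTrace (hA : A.PosSemidef) (hB : B.PosSemidef) {s : ℝ}
    (hs : s ∈ Set.Ioo (0 : ℝ) 1) : (B.trace - (B - A)⁺.trace).re ≤ renyiTrace A B s := by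
  have hs' : 1 - s ∈ Set.Ioo (0 : ℝ) 1 := ⟨sub_pos.2 hs.2, sub_lt_self 1 hs.1⟩
  -- `K` dominates both `A` and `B`, so operator monotonicity of `x ^ s` makes three traces
  -- nonnegative; they add up to `Tr K - Tr A - Tr B + Tr (A ^ s B ^ (1 - s))`.
  obtain ⟨K, hK⟩ : ∃ K, K = A + (B - A)⁺ := ⟨_, rfl⟩
  have hAK : A ≤ K := hK ▸ le_add_of_nonneg_right (CFC.posPart_nonneg _)
  have hBK : B ≤ K := hK ▸ sub_le_iff_le_add'.1 (CFC.le_posPart (hB.1.sub hA.1))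
  have hK0 : K.PosSemidef := nonneg_iff_posSemidef.1 (hA.nonneg.trans hAK)
  have hmono {X : Matrix n n ℂ} (hXK : X ≤ K) {r : ℝ} (hr : r ∈ Set.Ioo (0 : ℝ) 1) :
      (K ^ r - X ^ r).PosSemidef :=
    le_iff.1 (CFC.rpow_le_rpow (Set.Ioo_subset_Icc_self hr) hXK)
  have h₁ := trace_mul_nonneg_of_posSemidef (hmono hBK hs) (rpow_posSemidef B (1 - s))
  have h₂ := trace_mul_nonneg_of_posSemidef (hmono hAK hs) (hmono hBK hs')
  have h₃ := trace_mul_nonneg_of_posSemidef (rpow_posSemidef A s) (hmono hAK hs')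
  simp only [sub_mul, mul_sub, rpow_mul_rpow_one_sub hs, hA.nonneg, hB.nonneg, hK0.nonneg,
    trace_sub] at h₁ h₂ h₃
  have hsum := (Complex.le_def.1 (add_nonneg (add_nonneg h₁ h₂) h₃)).1
  simp only [hK, trace_add, Complex.zero_re, Complex.add_re, Complex.sub_re] at hsum
  rw [renyiTrace, Complex.sub_re]
  linarith

/-- The matrix of `T` from an eigenbasis of `B` to an eigenbasis of `A`. For `T = 1` the squared
moduli of its entries are the Nussbaum–Szkoła weights, which turn traces of products of functions
of `A` and of `B` into weighted sums over pairs of eigenvalues. -/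
noncomputable def eigenbasisMatrix (hA : A.IsHermitian) (hB : B.IsHermitian)
    (T : Matrix n n ℂ) : Matrix n n ℂ :=
  star (hA.eigenvectorUnitary : Matrix n n ℂ) * T * hB.eigenvectorUnitary

lemma eigenbasisMatrix_add (hA : A.IsHermitian) (hB : B.IsHermitian) (S T : Matrix n n ℂ) :
    eigenbasisMatrix hA hB (S + T) = eigenbasisMatrix hA hB S + eigenbasisMatrix hA hB T := by
  simp only [eigenbasisMatrix, mul_add, add_mul]

lemma trace_diagonal_mul_mul_diagonal_mul_conjTranspose (a b : n → ℝ) (W : Matrix n n ℂ) :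
    (diagonal (fun i => (a i : ℂ)) * W * (diagonal (fun j => (b j : ℂ)) * Wᴴ)).trace.re
      = ∑ i, ∑ j, Complex.normSq (W i j) * (a i * b j) := by
  simp only [trace, diag_apply, mul_apply (M := diagonal _ * W), diagonal_mul,
    conjTranspose_apply, Complex.re_sum]
  refine Finset.sum_congr rfl fun i _ => Finset.sum_congr rfl fun j _ => ?_
  simp only [RCLike.star_def, Complex.mul_re, Complex.ofReal_re, Complex.ofReal_im, zero_mul,
    sub_zero, Complex.conj_re, Complex.conj_im, Complex.mul_im, add_zero, Complex.normSq_apply]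
  ring

lemma trace_cfc_mul_conj_cfc (hA : A.IsHermitian) (hB : B.IsHermitian) (f g : ℝ → ℝ)
    (T : Matrix n n ℂ) :
    (cfc f A * (T * cfc g B * Tᴴ)).trace.re
      = ∑ i, ∑ j, Complex.normSq (eigenbasisMatrix hA hB T i j)
        * (f (hA.eigenvalues i) * g (hB.eigenvalues j)) := by
  rw [← trace_diagonal_mul_mul_diagonal_mul_conjTranspose, hA.cfc_eq, hB.cfc_eq, IsHermitian.cfc,
    IsHermitian.cfc, Unitary.conjStarAlgAut_apply, Unitary.conjStarAlgAut_apply, mul_assoc,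
    mul_assoc, trace_mul_comm]
  simp only [eigenbasisMatrix, conjTranspose_mul, star_eq_conjTranspose,
    conjTranspose_conjTranspose, mul_assoc]
  rfl

lemma renyiTrace_eq_sum (hA : A.PosSemidef) (hB : B.PosSemidef) (s : ℝ) :
    renyiTrace A B s
      = ∑ i, ∑ j, Complex.normSq (eigenbasisMatrix hA.1 hB.1 1 i j)
        * (hA.1.eigenvalues i ^ s * hB.1.eigenvalues j ^ (1 - s)) := by
  have hcfc := trace_cfc_mul_conj_cfc hA.1 hB.1 (· ^ s) (· ^ (1 - s)) 1
  rwa [conjTranspose_one, one_mul, mul_one, ← CFC.rpow_eq_cfc_real hA.nonneg,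
    ← CFC.rpow_eq_cfc_real hB.nonneg] at hcfc

lemma normSq_add_mul_min_le (z w : ℂ) {a b : ℝ} (ha : 0 ≤ a) (hb : 0 ≤ b) :
    Complex.normSq (z + w) * min a b ≤ 2 * (Complex.normSq z * a + Complex.normSq w * b) := by
  have hadd : Complex.normSq (z + w) ≤ 2 * (Complex.normSq z + Complex.normSq w) := by
    simp only [Complex.normSq_eq_norm_sq]
    exact (pow_le_pow_left₀ (norm_nonneg _) (norm_add_le z w) 2).trans add_sq_le
  have hz := mul_le_mul_of_nonneg_left (min_le_left a b) (Complex.normSq_nonneg z)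
  have hw := mul_le_mul_of_nonneg_left (min_le_right a b) (Complex.normSq_nonneg w)
  linarith [mul_le_mul_of_nonneg_right hadd (le_min ha hb)]

lemma sum_normSq_mul_min_le_trace (hA : A.PosSemidef) (hB : B.PosSemidef) {P : Matrix n n ℂ}
    (hP : IsStarProjection P) :
    ∑ i, ∑ j, Complex.normSq (eigenbasisMatrix hA.1 hB.1 1 i j)
        * min (hA.1.eigenvalues i) (hB.1.eigenvalues j)
      ≤ 2 * (A * P + B * (1 - P)).trace.re := by
  have hsq {Q : Matrix n n ℂ} (hQ : IsStarProjection Q) : Q * Qᴴ = Q ∧ Qᴴ * Q = Q := by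
    rw [← star_eq_conjTranspose, hQ.isSelfAdjoint.star_eq]
    exact ⟨hQ.isIdempotentElem, hQ.isIdempotentElem⟩
  have hAP := trace_cfc_mul_conj_cfc hA.1 hB.1 (fun x => x) (fun _ => 1) P
  rw [cfc_id' ℝ A hA.1.isSelfAdjoint, cfc_const_one ℝ B hB.1.isSelfAdjoint, mul_one,
    (hsq hP).1] at hAP
  have hBP := trace_cfc_mul_conj_cfc hA.1 hB.1 (fun _ => 1) (fun x => x) (1 - P)
  rw [cfc_id' ℝ B hB.1.isSelfAdjoint, cfc_const_one ℝ A hA.1.isSelfAdjoint, one_mul,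
    trace_mul_cycle, trace_mul_comm, (hsq hP.one_sub).2] at hBP
  rw [trace_add, Complex.add_re, hAP, hBP]
  simp only [← Finset.sum_add_distrib, Finset.mul_sum, mul_one, one_mul]
  refine Finset.sum_le_sum fun i _ => Finset.sum_le_sum fun j _ => ?_
  rw [← add_sub_cancel P 1, eigenbasisMatrix_add, add_sub_cancel]
  exact normSq_add_mul_min_le _ _ (hA.eigenvalues_nonneg i) (hB.eigenvalues_nonneg j)

lemma tiltingBound_renyiTrace (hA : A.PosSemidef) (hB : B.PosSemidef) :
    TiltingBound 2 (B.trace - (B - A)⁺.trace).re (renyiTrace A B) := by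
  obtain ⟨P, hP, hposPart⟩ :=
    exists_isStarProjection_mul_eq_posPart (hB.1.sub hA.1).isSelfAdjoint
      (B - A).finite_real_spectrum
  have htrace : A * P + B * (1 - P) = B - (B - A)⁺ := by
    rw [← hposPart, sub_mul, mul_sub, mul_one]
    abel
  have hsum := sum_normSq_mul_min_le_trace hA hB hP
  rw [htrace, trace_sub, ← Fintype.sum_prod_type'] at hsum
  have hrenyi : renyiTrace A B = _ := funext fun s =>
    (renyiTrace_eq_sum hA hB s).trans (Fintype.sum_prod_type' _).symm
  rw [hrenyi]
  exact (TiltingBound.sum_mul _ (fun p _ => Complex.normSq_nonneg _) fun p _ =>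
    .rpow_mul_rpow (hA.eigenvalues_nonneg p.1) (hB.eigenvalues_nonneg p.2)).mono
      ((one_mul _).trans_le hsum)

lemma cfcM_eq_cfc {d : ℕ} {A : Matrix (Fin d) (Fin d) ℂ} (hA : A.IsHermitian) (f : ℝ → ℝ) :
    cfcM f A = cfc f A := by
  rw [hA.cfc_eq, cfcM, dif_pos hA, IsHermitian.cfc, Unitary.conjStarAlgAut_apply]
  rfl

lemma trace_mpow_mul_mpow_re {d : ℕ} {A B : Matrix (Fin d) (Fin d) ℂ} (hA : A.PosSemidef)
    (hB : B.PosSemidef) (s : ℝ) :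
    (mpow A s * mpow B (1 - s)).trace.re = renyiTrace A B s := by
  rw [renyiTrace, mpow, mpow, cfcM_eq_cfc hA.1, cfcM_eq_cfc hB.1, CFC.rpow_eq_cfc_real hA.nonneg,
    CFC.rpow_eq_cfc_real hB.nonneg]

lemma minErr_eq_trace_sub_posPart {d : ℕ} {A B : Matrix (Fin d) (Fin d) ℂ} (hA : A.IsHermitian)
    (hB : B.IsHermitian) :
    minErr A B = (B.trace - (B - A)⁺.trace).re := by
  have hBA : IsSelfAdjoint (B - A) := (hB.sub hA).isSelfAdjoint
  have habs : matAbs (B - A) = CFC.abs (B - A) := by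
    rw [matAbs, cfcM_eq_cfc (hB.sub hA), CFC.abs_eq_cfc_norm (B - A) hBA]
    rfl
  have htrace := congrArg (fun X : Matrix (Fin d) (Fin d) ℂ => X.trace.re)
    (CFC.abs_add_self (B - A) hBA)
  simp only [two_nsmul, trace_add, trace_sub, Complex.add_re, Complex.sub_re] at htrace
  rw [minErr, habs, Complex.sub_re]
  linarith

-- Products of positive definite matrices vanish only in dimension zero, where `log 0 = 0` forces
-- a zero limit.
lemma eventually_mul_ne_zero_of_tendsto_log_div {ι : Type*} {l : Filter ι} {d : ι → ℕ}
    {ν ω X : ∀ n, Matrix (Fin (d n)) (Fin (d n)) ℂ} (hν : ∀ n, (ν n).PosDef)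
    (hω : ∀ n, (ω n).PosDef) {w : ι → ℝ} {c : ℝ}
    (hlog : Tendsto (fun n => Real.log (X n).trace.re / w n) l (nhds c)) (hc : c ≠ 0) :
    ∀ᶠ n in l, ν n * ω n ≠ 0 := by
  filter_upwards [eventually_ne_zero_of_tendsto_log_div hlog hc] with n hn
  have : Nontrivial (Matrix (Fin (d n)) (Fin (d n)) ℂ) :=
    nontrivial_of_ne (X n) 0 fun h => hn (by rw [h, trace_zero, Complex.zero_re])
  exact ((hν n).isUnit.mul (hω n).isUnit).ne_zero

theorem chernoff_bound_general {ι : Type*} {l : Filter ι} {d : ι → ℕ}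
    (ν ω : ∀ n, Matrix (Fin (d n)) (Fin (d n)) ℂ)
    (hν : ∀ n, (ν n).PosSemidef) (hω : ∀ n, (ω n).PosSemidef)
    (hνω : ∀ᶠ n in l, ν n * ω n ≠ 0) (w : ι → ℝ) (hw : Tendsto w l atTop) (e : ℝ → ℝ)
    (he : ∀ s ∈ Set.Ioo (0 : ℝ) 1, Tendsto
      (fun n => Real.log (((mpow (ν n) s * mpow (ω n) (1 - s)).trace).re) / w n)
      l (nhds (e s)))
    (hediff : ∀ s ∈ Set.Ioo (0 : ℝ) 1, DifferentiableAt ℝ e s) :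
    Tendsto (fun n => Real.log (minErr (ν n) (ω n)) / w n) l
      (nhds (sInf (e '' Set.Ioo 0 1))) := by
  simp only [trace_mpow_mul_mpow_re, hν, hω] at he
  simp only [minErr_eq_trace_sub_posPart, (hν _).1, (hω _).1]
  exact tendsto_log_div_sInf_of_tiltingBound hw
    (hνω.mono fun n hn s hs => renyiTrace_pos (hν n) (hω n) hn hs) he hediff
    (fun n s hs => trace_sub_posPart_le_renyiTrace (hν n) (hω n) hs) two_pos
    fun n => tiltingBound_renyiTrace (hν n) (hω n)

end Matrices

/-- Chernoff bound: under assumption (AF1),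
`lim (1/w_n) log D(ν_n, ω_n) = inf_{s∈[0,1]} e(s)`. -/
theorem chernoff_bound {d : ℕ → ℕ}
    (ν ω : ∀ n, Matrix (Fin (d n)) (Fin (d n)) ℂ)
    (hν : ∀ n, (ν n).PosDef) (hω : ∀ n, (ω n).PosDef)
    (w : ℕ → ℝ) (hw : ∀ n, 0 < w n) (hwtop : Tendsto w atTop atTop)
    (e : ℝ → ℝ)
    (he : ∀ s ∈ Set.Icc (0 : ℝ) 1, Tendsto
      (fun n => Real.log (((mpow (ν n) s * mpow (ω n) (1 - s)).trace).re) / w n)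
      atTop (nhds (e s)))
    (hecont : ContinuousOn e (Set.Icc (0 : ℝ) 1))
    (hediff : ∀ s ∈ Set.Ioo (0 : ℝ) 1, DifferentiableAt ℝ e s)
    (dp dm : ℝ)
    (hdp : HasDerivWithinAt e dp (Set.Ici (0 : ℝ)) 0)
    (hdm : HasDerivWithinAt e dm (Set.Iic (1 : ℝ)) 1)
    (hgap : dp < dm) :
    Tendsto (fun n => Real.log (minErr (ν n) (ω n)) / w n) atTop
      (nhds (sInf (e '' Set.Icc (0 : ℝ) 1))) := by
  obtain ⟨s, hs, hes⟩ := exists_ne_of_hasDerivWithinAt_endpoints_ne zero_lt_one hdp hdm hgap.ne 0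
  rw [← sInf_image_Ioo_eq_of_continuousOn zero_lt_one hecont]
  exact chernoff_bound_general ν ω (fun n => (hν n).posSemidef) (fun n => (hω n).posSemidef)
    (eventually_mul_ne_zero_of_tendsto_log_div hν hω (he s hs) hes) w hwtop e
    (fun s hs => he s (Set.Ioo_subset_Icc_self hs)) hediff
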